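/- In every Kochen-Specker graph of minimum order, each vertex lies on a triangle; that is, if G is a KS graph such that no KS graph has fewer vertices than G, then every vertex of G has two adjacent neighbors. -/

import Mathlib

open Matrix

/-- A 010-coloring of a graph: no two adjacent vertices are both 0,
and no triangle has all three vertices 1. -/
def Is010Coloring {V : Type*} (G : SimpleGraph V) (c : V → Fin 2) : Prop :=
  (∀ u v : V, G.Adj u v → ¬(c u = 0 ∧ c v = 0)) ∧
  (∀ u v w : V, G.Adj u v → G.Adj v w → G.Adj u w →
    ¬(c u = 1 ∧ c v = 1 ∧ c w = 1))

/-- A graph is 010-colorable if it admits a 010-coloring. -/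
def Is010Colorable {V : Type*} (G : SimpleGraph V) : Prop :=
  ∃ c : V → Fin 2, Is010Coloring G c

/-- An embedding of a graph into ℝ³: adjacent vertices map to orthogonal
vectors, and distinct vertices map to non-collinear vectors. -/
def IsEmbedding {V : Type*} (G : SimpleGraph V) (p : V → Fin 3 → ℝ) : Prop :=
  (∀ u v : V, G.Adj u v → p u ⬝ᵥ p v = 0) ∧
  (∀ u v : V, u ≠ v → crossProduct (p u) (p v) ≠ 0)

/-- A graph is embeddable if it admits an embedding into ℝ³. -/
def Embeddable {V : Type*} (G : SimpleGraph V) : Prop :=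
  ∃ p : V → Fin 3 → ℝ, IsEmbedding G p

/-- A Kochen-Specker graph: embeddable and not 010-colorable. -/
def IsKSGraph {V : Type*} (G : SimpleGraph V) : Prop :=
  Embeddable G ∧ ¬ Is010Colorable G

/-!
A vertex on no triangle can always be colored 1: this creates neither an edge colored 0, 0 nor a
triangle colored 1, 1, 1. Deleting such a vertex therefore keeps a graph non-010-colorable, and it
keeps the graph embeddable, so a KS graph in which some vertex is on no triangle is not minimal.
-/

theorem Embeddable.of_isContained {V W : Type*} {G : SimpleGraph V} {H : SimpleGraph W}
    (hH : Embeddable H) (hGH : G.IsContained H) : Embeddable G := by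
  obtain ⟨p, p_orthogonal, p_noncollinear⟩ := hH
  obtain ⟨f⟩ := hGH
  exact ⟨p ∘ f, fun _ _ h => p_orthogonal _ _ (f.toHom.map_adj h),
    fun _ _ h => p_noncollinear _ _ (f.injective.ne h)⟩

section Induce

variable {V : Type*} {G : SimpleGraph V} {s : Set V}

theorem Is010Coloring.extend_one {c : s → Fin 2} (hc : Is010Coloring (G.induce s) c)
    (hs : ∀ u v w, G.Adj u v → G.Adj u w → G.Adj v w → u ∈ s) :
    Is010Coloring G (Function.extend Subtype.val c 1) := by
  have extend_coe (u : s) : Function.extend Subtype.val c 1 (u : V) = c u :=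
    Subtype.val_injective.extend_apply c 1 u
  have mem_of_eq_zero {u : V} (hu : Function.extend Subtype.val c 1 u = 0) : u ∈ s := by
    by_contra hus
    rw [Function.extend_apply' _ _ _ (by simpa using hus)] at hu
    exact one_ne_zero hu
  constructor
  · rintro u v huv ⟨hu, hv⟩
    lift u to s using mem_of_eq_zero hu
    lift v to s using mem_of_eq_zero hv
    rw [extend_coe] at hu hv
    exact hc.1 u v huv ⟨hu, hv⟩
  · rintro u v w huv hvw huw ⟨hu, hv, hw⟩
    lift u to s using hs u v w huv huw hvw
    lift v to s using hs v u w huv.symm hvw huw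
    lift w to s using hs w u v huw.symm hvw.symm huv
    rw [extend_coe] at hu hv hw
    exact hc.2 u v w huv hvw huw ⟨hu, hv, hw⟩

theorem IsKSGraph.induce (hG : IsKSGraph G)
    (hs : ∀ u v w, G.Adj u v → G.Adj u w → G.Adj v w → u ∈ s) :
    IsKSGraph (G.induce s) :=
  ⟨hG.1.of_isContained (SimpleGraph.Embedding.induce s).isContained,
    fun ⟨_, hc⟩ => hG.2 ⟨_, hc.extend_one hs⟩⟩

end Induce

theorem ks_min_order_vertex_on_triangle_general {V : Type*} (G : SimpleGraph V)
    (hKS : IsKSGraph G) (v : V) (hv : ¬ IsKSGraph (G.induce {v}ᶜ)) :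
    ∃ u w : V, G.Adj v u ∧ G.Adj v w ∧ G.Adj u w := by
  by_contra no_triangle
  refine hv (hKS.induce ?_)
  rintro x u w hxu hxw huw rfl
  exact no_triangle ⟨u, w, hxu, hxw, huw⟩

/-- In every Kochen-Specker graph of minimum order, each vertex lies on a
triangle, i.e. has two adjacent neighbors. -/
theorem ks_min_order_vertex_on_triangle {V : Type} [Fintype V]
    (G : SimpleGraph V) (hKS : IsKSGraph G)
    (hmin : ∀ (W : Type) [Fintype W] (H : SimpleGraph W),
      IsKSGraph H → Fintype.card V ≤ Fintype.card W) :
    ∀ v : V, ∃ u w : V, G.Adj v u ∧ G.Adj v w ∧ G.Adj u w := by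
  classical
  intro v
  have card_lt : Fintype.card ({v}ᶜ : Set V) < Fintype.card V :=
    Fintype.card_subtype_lt (x := v) (by simp)
  exact ks_min_order_vertex_on_triangle_general G hKS v fun h => (hmin _ _ h).not_gt card_lt
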